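/- For all m, n ≥ 1: if a finite semigroup U divides a two-sided semidirect product A ⋈ B with A ∈ SL^m and B ∈ SL^n, then U ∈ SL^{m+n}. -/

import Mathlib

open Pointwise

/-- A semigroup `S` *divides* a semigroup `T` if `S` is a homomorphic image of a
subsemigroup of `T`. -/
def Divides (S : Type) [Mul S] (T : Type) [Mul T] : Prop :=
  ∃ (U : Subsemigroup T) (f : U →ₙ* S), Function.Surjective f

/-- A semilattice: a commutative semigroup in which every element is idempotent. -/
def IsSemilattice (S : Type) [Mul S] : Prop :=
  (∀ a b : S, a * b = b * a) ∧ ∀ a : S, a * a = a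

/-- The data of a two-sided semidirect product `S ⋈ T`: a left action and a right
action of `T` on `S` satisfying the usual axioms. -/
structure BowtieData (S T : Type) [Semigroup S] [Semigroup T] where
  lact : T → S → S
  ract : S → T → S
  lact_mul : ∀ t s s', lact t (s * s') = lact t s * lact t s'
  mul_ract : ∀ s s' t, ract (s * s') t = ract s t * ract s' t
  mul_lact : ∀ t t' s, lact (t * t') s = lact t (lact t' s)
  ract_mul : ∀ s t t', ract s (t * t') = ract (ract s t) t'
  lact_ract : ∀ t s t', ract (lact t s) t' = lact t (ract s t')

/-- The underlying set of the two-sided semidirect product `S ⋈ T`. -/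
structure Bowtie {S T : Type} [Semigroup S] [Semigroup T] (d : BowtieData S T) where
  fst : S
  snd : T

instance {S T : Type} [Semigroup S] [Semigroup T] (d : BowtieData S T) :
    Mul (Bowtie d) :=
  ⟨fun a b => ⟨d.ract a.fst b.snd * d.lact a.snd b.fst, a.snd * b.snd⟩⟩

theorem Bowtie.mul_def {S T : Type} [Semigroup S] [Semigroup T] {d : BowtieData S T}
    (a b : Bowtie d) :
    a * b = ⟨d.ract a.fst b.snd * d.lact a.snd b.fst, a.snd * b.snd⟩ := rfl

/-- The two-sided semidirect product is a semigroup. -/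
instance {S T : Type} [Semigroup S] [Semigroup T] (d : BowtieData S T) :
    Semigroup (Bowtie d) where
  mul_assoc a b c := by
    simp only [Bowtie.mul_def, Bowtie.mk.injEq]
    exact ⟨by simp only [d.mul_ract, d.mul_lact, d.ract_mul, d.lact_mul, d.lact_ract,
      mul_assoc], mul_assoc _ _ _⟩

instance {S T : Type} [Semigroup S] [Semigroup T] [Finite S] [Finite T]
    (d : BowtieData S T) : Finite (Bowtie d) :=
  Finite.of_surjective (fun p : S × T => Bowtie.mk p.1 p.2) fun b => ⟨(b.fst, b.snd), rfl⟩
/-- A bundled finite semigroup. -/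
structure FinSgr where
  carrier : Type
  str : Semigroup carrier
  fin : Finite carrier

attribute [instance] FinSgr.str FinSgr.fin

/-- The classes `SL^k` of finite semigroups: `SL^1` is the class of finite semilattices,
and `SL^(k+1)` is the class of finite semigroups dividing some two-sided semidirect
product `A ⋈ B` with `A` a finite semilattice and `B ∈ SL^k`.  (`SL^0` is empty.) -/
def SL : ℕ → FinSgr → Prop
  | 0, _ => False
  | 1, T => IsSemilattice T.carrier
  | (k+2), T =>
      ∃ (A B : FinSgr) (d : BowtieData A.carrier B.carrier),
        IsSemilattice A.carrier ∧ SL (k+1) B ∧ Divides T.carrier (Bowtie d)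

/-- Membership of a finite semigroup in the class `SL^k`. -/
def MemSL (k : ℕ) (S : Type) [Semigroup S] [Finite S] : Prop :=
  SL k ⟨S, inferInstance, inferInstance⟩

/-!
Two-sided semidirect products reassociate up to division. Suppose `A` divides `C ⋈ D` and `B` acts
on `A`. Sending `a` to the function `(x, y) ↦ x a y` embeds `A ⋈ B` into the block product
`A □ B = A^(B¹ × B¹) ⋈ B`. This divides `(C ⋈ D) □ B`, which embeds into a block product
`C □ (D □ B)`: a semidirect product of a power of `C` by a semidirect product of a power of `D` by
`B`. Since the classes `SL^k` are closed under finite powers, induction on `m` peels off one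
semilattice `C` at a time from `A ∈ SL^m`.
-/

attribute [ext] Bowtie

namespace Divides

variable {S T W : Type}

theorem of_injective_of_surjective {V : Type} [Mul V] [Mul S] [Mul T] {ι : V →ₙ* T} {f : V →ₙ* S}
    (hι : Function.Injective ι) (hf : Function.Surjective f) : Divides S T :=
  let e : V ≃* ι.srange := MulEquiv.ofBijective ι.srangeRestrict
    ⟨fun _ _ h => hι (congrArg Subtype.val h), ι.srangeRestrict_surjective⟩
  ⟨ι.srange, f.comp e.symm.toMulHom, hf.comp e.symm.surjective⟩

theorem of_injective [Mul S] [Mul T] {ι : S →ₙ* T} (hι : Function.Injective ι) : Divides S T :=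
  of_injective_of_surjective (f := MulHom.id S) hι Function.surjective_id

theorem refl (S : Type) [Mul S] : Divides S S :=
  of_injective (ι := MulHom.id S) Function.injective_id

theorem trans [Mul S] [Mul T] [Mul W] (hST : Divides S T) (hTW : Divides T W) : Divides S W := by
  obtain ⟨V, f, hf⟩ := hST
  obtain ⟨V', g, hg⟩ := hTW
  refine of_injective_of_surjective
    (ι := (MulMemClass.subtype V').comp (MulMemClass.subtype (V.comap g)))
    (f := f.comp (g.subsemigroupComap V))
    (Subtype.val_injective.comp Subtype.val_injective) (hf.comp fun t => ?_)
  obtain ⟨v, hv⟩ := hg t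
  exact ⟨⟨v, show g v ∈ V from hv ▸ t.2⟩, Subtype.ext hv⟩

theorem pi [Mul S] [Mul T] (h : Divides S T) (X : Type) : Divides (X → S) (X → T) := by
  obtain ⟨V, f, hf⟩ := h
  exact of_injective_of_surjective (ι := (MulMemClass.subtype V).compLeft X) (f := f.compLeft X)
    Subtype.val_injective.comp_left hf.comp_left

end Divides

namespace IsSemilattice

variable {S T : Type}

theorem pi [Mul S] (h : IsSemilattice S) (X : Type) : IsSemilattice (X → S) :=
  ⟨fun _ _ => funext fun _ => h.1 _ _, fun _ => funext fun _ => h.2 _⟩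

theorem of_divides [Mul S] [Mul T] (hT : IsSemilattice T) (h : Divides S T) : IsSemilattice S := by
  obtain ⟨V, f, hf⟩ := h
  refine ⟨hf.forall₂.2 fun v w => ?_, hf.forall.2 fun v => ?_⟩
  · rw [← map_mul, ← map_mul, show v * w = w * v from Subtype.ext (hT.1 _ _)]
  · rw [← map_mul, show v * v = v from Subtype.ext (hT.2 _)]

end IsSemilattice

namespace BowtieData

variable {S T : Type} [Semigroup S] [Semigroup T]

/-- The componentwise two-sided action of `X → T` on `X → S`, so that `(S ⋈ T)^X` becomes
`S^X ⋈ T^X`. -/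
def pi (d : BowtieData S T) (X : Type) : BowtieData (X → S) (X → T) where
  lact t s := fun x => d.lact (t x) (s x)
  ract s t := fun x => d.ract (s x) (t x)
  lact_mul _ _ _ := funext fun _ => d.lact_mul _ _ _
  mul_ract _ _ _ := funext fun _ => d.mul_ract _ _ _
  mul_lact _ _ _ := funext fun _ => d.mul_lact _ _ _
  ract_mul _ _ _ := funext fun _ => d.ract_mul _ _ _
  lact_ract _ _ _ := funext fun _ => d.lact_ract _ _ _

theorem pi_divides_bowtie_pi (d : BowtieData S T) (X : Type) :
    Divides (X → Bowtie d) (Bowtie (d.pi X)) := by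
  let ι : (X → Bowtie d) →ₙ* Bowtie (d.pi X) :=
    ⟨fun u => ⟨fun x => (u x).fst, fun x => (u x).snd⟩, fun _ _ => rfl⟩
  refine Divides.of_injective (ι := ι) fun u v h => funext fun x => ?_
  exact Bowtie.ext (congrFun (congrArg Bowtie.fst h) x) (congrFun (congrArg Bowtie.snd h) x)

/-- The two-sided action of `T` on `S` extended to `WithOne T`, the new identity acting trivially
on both sides. -/
def withOne (d : BowtieData S T) : BowtieData S (WithOne T) where
  lact t s := t.recOneCoe s fun t => d.lact t s
  ract s t := t.recOneCoe s fun t => d.ract s t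
  lact_mul t _ _ := by
    cases t with
    | one => rfl
    | coe t => exact d.lact_mul _ _ _
  mul_ract _ _ t := by
    cases t with
    | one => rfl
    | coe t => exact d.mul_ract _ _ _
  mul_lact t t' _ := by
    cases t with
    | one => rw [one_mul]; rfl
    | coe t => cases t' with
      | one => rfl
      | coe t' => exact d.mul_lact _ _ _
  ract_mul _ t t' := by
    cases t with
    | one => rw [one_mul]; rfl
    | coe t => cases t' with
      | one => rfl
      | coe t' => exact d.ract_mul _ _ _
  lact_ract t _ t' := by
    cases t with
    | one => rfl
    | coe t => cases t' with
      | one => rfl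
      | coe t' => exact d.lact_ract _ _ _

theorem mul_fst_eq_withOne {d : BowtieData S T} (u v : Bowtie d) :
    (u * v).fst = d.withOne.ract u.fst v.snd * d.withOne.lact u.snd v.fst := rfl

/-- The two-sided action of `T` on `S^(N × N)` translating the arguments along `φ : T → N`:
`(t f)(x, y) = f(x φ(t), y)` and `(f t)(x, y) = f(x, φ(t) y)`. -/
def block (S : Type) [Semigroup S] {T N : Type} [Semigroup T] [Semigroup N] (φ : T →ₙ* N) :
    BowtieData (N → N → S) T where
  lact t f := fun x y => f (x * φ t) y
  ract f t := fun x y => f x (φ t * y)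
  lact_mul _ _ _ := rfl
  mul_ract _ _ _ := rfl
  mul_lact _ _ _ := by simp only [map_mul, mul_assoc]
  ract_mul _ _ _ := by simp only [map_mul, mul_assoc]
  lact_ract _ _ _ := rfl

end BowtieData

/-- The block product of `S` and `T` relative to `φ : T → N`. The usual block product `S □ T` is
the case where `φ` is the inclusion of `T` into `WithOne T`. -/
abbrev BlockProduct (S : Type) [Semigroup S] {T N : Type} [Semigroup T] [Semigroup N]
    (φ : T →ₙ* N) : Type :=
  Bowtie (BowtieData.block S φ)

namespace BlockProduct

variable {S S' T T' N : Type} [Semigroup S] [Semigroup S'] [Semigroup T] [Semigroup T']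
  [Semigroup N]

theorem mul_fst {φ : T →ₙ* N} (u v : BlockProduct S φ) (x y : N) :
    (u * v).fst x y = u.fst x (φ v.snd * y) * v.fst (x * φ u.snd) y := rfl

theorem mul_snd {φ : T →ₙ* N} (u v : BlockProduct S φ) : (u * v).snd = u.snd * v.snd := rfl

/-- The homomorphism of block products induced by homomorphisms of `S` and of `T` over `N`. -/
def map {φ : T →ₙ* N} {φ' : T' →ₙ* N} (f : S →ₙ* S') (g : T →ₙ* T') (hg : ∀ t, φ' (g t) = φ t) :
    BlockProduct S φ →ₙ* BlockProduct S' φ' where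
  toFun u := ⟨fun x y => f (u.fst x y), g u.snd⟩
  map_mul' u v := by
    ext
    · simp only [mul_fst, hg, map_mul]
    · simp only [mul_snd, map_mul]

end BlockProduct

theorem Divides.blockProduct {S S' T N : Type} [Semigroup S] [Semigroup S'] [Semigroup T]
    [Semigroup N] (h : Divides S S') (φ : T →ₙ* N) :
    Divides (BlockProduct S φ) (BlockProduct S' φ) := by
  obtain ⟨V, f, hf⟩ := h
  refine Divides.of_injective_of_surjective (V := BlockProduct V φ)
    (ι := BlockProduct.map (MulMemClass.subtype V) (MulHom.id T) fun _ => rfl)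
    (f := BlockProduct.map f (MulHom.id T) fun _ => rfl) (fun u v huv => ?_) fun u => ?_
  · obtain ⟨hfst, hsnd⟩ := Bowtie.ext_iff.1 huv
    exact Bowtie.ext (funext₂ fun x y => Subtype.ext (congrFun₂ hfst x y)) hsnd
  · choose w hw using fun x y => hf (u.fst x y)
    exact ⟨⟨w, u.snd⟩, Bowtie.ext (funext₂ hw) rfl⟩

theorem BowtieData.bowtie_divides_blockProduct {S T : Type} [Semigroup S] [Semigroup T]
    (d : BowtieData S T) :
    Divides (Bowtie d) (BlockProduct S (WithOne.coeMulHom : T →ₙ* WithOne T)) := by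
  let ι : Bowtie d →ₙ* BlockProduct S (WithOne.coeMulHom : T →ₙ* WithOne T) :=
    { toFun u := ⟨fun x y => d.withOne.ract (d.withOne.lact x u.fst) y, u.snd⟩
      map_mul' u v := by
        ext x y
        · simp only [mul_fst_eq_withOne u v, BlockProduct.mul_fst, WithOne.coeMulHom_apply,
            lact_mul, mul_lact, mul_ract, ract_mul, lact_ract]
        · rfl }
  refine Divides.of_injective (ι := ι) fun u v h => ?_
  obtain ⟨hfst, hsnd⟩ := Bowtie.ext_iff.1 h
  exact Bowtie.ext (congrFun₂ hfst 1 1) hsnd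

section BlockAssociativity

variable {C D T N : Type} [Semigroup C] [Semigroup D] [Semigroup T] [Monoid N]

/-- The homomorphism indexing the outer block product in `C □ (D □ T)`. An identity is adjoined to
`D` so that its target contains elements `⟨1, x⟩`, which reach every index `x : N` without acting
on `C`. -/
def blockIndexHom (D : Type) [Semigroup D] (φ : T →ₙ* N) :
    BlockProduct D φ →ₙ* BlockProduct (WithOne D) (MulHom.id N) :=
  BlockProduct.map WithOne.coeMulHom φ fun _ => rfl

theorem blockIndexHom_apply (φ : T →ₙ* N) (u : BlockProduct D φ) :
    blockIndexHom D φ u = ⟨fun x y => (u.fst x y : WithOne D), φ u.snd⟩ := rfl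

/-- The embedding of `(C ⋈ D) □ T` into `C □ (D □ T)`. The value at `(p, q)` of the function
attached to `u` is the `C`-component at `(1, 1)` of the product `p u q`, where `p` and `q` are
regarded as having trivial `C`-component. -/
def blockAssoc (e : BowtieData C D) (φ : T →ₙ* N) :
    BlockProduct (Bowtie e) φ →ₙ* BlockProduct C (blockIndexHom D φ) where
  toFun u :=
    { fst p q := e.withOne.lact (p.fst 1 (φ u.snd * q.snd))
        (e.withOne.ract (u.fst p.snd q.snd).fst (q.fst (p.snd * φ u.snd) 1))
      snd := ⟨fun x y => (u.fst x y).snd, u.snd⟩ }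
  map_mul' u v := by
    ext p q
    · simp only [BlockProduct.mul_fst (φ := blockIndexHom D φ), BlockProduct.mul_fst,
        BlockProduct.mul_snd, BowtieData.mul_fst_eq_withOne]
      simp only [blockIndexHom_apply, MulHom.id_apply, map_mul, e.withOne.lact_mul,
        e.withOne.mul_lact, e.withOne.mul_ract, e.withOne.ract_mul, e.withOne.lact_ract, mul_assoc,
        one_mul, mul_one]
    · rfl
    · rfl

theorem blockAssoc_injective (e : BowtieData C D) (φ : T →ₙ* N) :
    Function.Injective (blockAssoc e φ) := by
  intro u v h
  obtain ⟨hC, hDT⟩ := Bowtie.ext_iff.1 h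
  obtain ⟨hD, hT⟩ := Bowtie.ext_iff.1 hDT
  refine Bowtie.ext (funext₂ fun x y => Bowtie.ext ?_ (congrFun₂ hD x y)) hT
  exact congrFun₂ hC ⟨fun _ _ => 1, x⟩ ⟨fun _ _ => 1, y⟩

end BlockAssociativity

theorem Divides.bowtie_blockProduct_blockIndexHom {A B C D : Type} [Semigroup A]
    [Semigroup B] [Semigroup C] [Semigroup D] {e : BowtieData C D} (h : Divides A (Bowtie e))
    (d : BowtieData A B) :
    Divides (Bowtie d)
      (BlockProduct C (blockIndexHom D (WithOne.coeMulHom : B →ₙ* WithOne B))) :=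
  (d.bowtie_divides_blockProduct.trans (h.blockProduct _)).trans
    (Divides.of_injective (blockAssoc_injective e _))

instance finite_withOne {S : Type} [Finite S] : Finite (WithOne S) :=
  inferInstanceAs (Finite (Option S))

namespace MemSL

theorem succ_of_divides {n : ℕ} {U A B : Type} [Semigroup U] [Finite U] [Semigroup A] [Finite A]
    [Semigroup B] [Finite B] {d : BowtieData A B} (hA : IsSemilattice A) (hB : MemSL n B)
    (h : Divides U (Bowtie d)) : MemSL (n + 1) U :=
  match n, hB with
  | _ + 1, hB =>
    ⟨⟨A, inferInstance, inferInstance⟩, ⟨B, inferInstance, inferInstance⟩, d, hA, hB, h⟩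

theorem of_divides {n : ℕ} {S T : Type} [Semigroup S] [Finite S] [Semigroup T] [Finite T]
    (hT : MemSL n T) (h : Divides S T) : MemSL n S :=
  match n, hT with
  | 1, hT => IsSemilattice.of_divides hT h
  | _ + 2, ⟨A, B, d, hA, hB, hdiv⟩ => ⟨A, B, d, hA, hB, h.trans hdiv⟩

theorem pi {n : ℕ} {S : Type} [Semigroup S] [Finite S] (h : MemSL n S) (X : Type) [Finite X] :
    MemSL n (X → S) :=
  match n, h with
  | 1, h => IsSemilattice.pi h X
  | _ + 2, ⟨_, _, d, hA, hB, hdiv⟩ =>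
    succ_of_divides (hA.pi X) (pi hB X) ((hdiv.pi X).trans (d.pi_divides_bowtie_pi X))

theorem bowtie {m n : ℕ} {A B : Type} [Semigroup A] [Finite A] [Semigroup B] [Finite B]
    (hA : MemSL m A) (hB : MemSL n B) (d : BowtieData A B) : MemSL (m + n) (Bowtie d) :=
  match m, hA with
  | 1, hA => Nat.add_comm n 1 ▸ succ_of_divides hA hB (Divides.refl _)
  | k + 2, ⟨C, D, e, hC, hD, hdiv⟩ => by
    have hblock : MemSL (k + 1 + n) (BlockProduct D.carrier
        (WithOne.coeMulHom : B →ₙ* WithOne B)) :=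
      bowtie ((pi hD _).pi _) hB _
    rw [Nat.succ_add]
    exact succ_of_divides ((hC.pi _).pi _) hblock (hdiv.bowtie_blockProduct_blockIndexHom d)

end MemSL

/-- For `m, n ≥ 1`: a finite semigroup dividing a two-sided semidirect
product `A ⋈ B` with `A ∈ SL^m` and `B ∈ SL^n` lies in `SL^(m+n)`. -/
theorem SL_bowtie_SL_sub_SL
    (m n : ℕ) (hm : 1 ≤ m) (hn : 1 ≤ n)
    (U : Type) [Semigroup U] [Finite U]
    (A B : Type) [Semigroup A] [Semigroup B] [Finite A] [Finite B]
    (d : BowtieData A B) (hA : MemSL m A) (hB : MemSL n B)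
    (hdiv : Divides U (Bowtie d)) :
    MemSL (m + n) U :=
  (hA.bowtie hB d).of_divides hdiv
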